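/- arXiv:2307.15300 — 3 statements merged into one kernel-verified Lean document; each statement's English description precedes it below -/
import Mathlib

section
/- The threshold k = [δ1δ3(1+η) − (δ3+ηδ1)γ2 − a0(δ1−δ3)γ2] / [(1+η)(δ1δ3+γ2) − (δ3+ηδ1)γ2 − (δ1+ηδ3) − a1(γ2−1)(δ1−δ3)] · (β_s/β_b) is strictly positive. -/
/-!
The numbers `δ1, δ3` are lower roots, and `γ2` an upper root, of quadratics `X ^ 2 - m * X - c`
that differ only in `c`. Evaluating them at `0` and `1` gives `δ3 ≤ δ1 < 0` and `1 < γ2`.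
The numerator and the denominator of `k` are the values at `(t, a) = (0, a0)` and `(1, a1)` of
`(1 + η) * (t - δ1) * (γ2 - δ3) + (1 - a) * (γ2 - t) * (δ1 - δ3)`,
which is positive as soon as `δ3 ≤ δ1 < t ≤ γ2`, `a ≤ 1` and `-1 < η`.
-/

section QuadraticRoots

variable {b c x : ℝ}

/-- The smaller root of `X ^ 2 - b * X - c`, when the discriminant is nonnegative. With
`c = (r - μ1) / σ` this is the negative characteristic exponent at discount rate `r`. -/
noncomputable def lowerRoot (b c : ℝ) : ℝ := (b - √(b ^ 2 + 4 * c)) / 2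

/-- The larger root of `X ^ 2 - b * X - c`, when the discriminant is nonnegative. With
`c = (r - μ1) / σ` this is the positive characteristic exponent at discount rate `r`. -/
noncomputable def upperRoot (b c : ℝ) : ℝ := (b + √(b ^ 2 + 4 * c)) / 2

theorem abs_two_mul_sub_lt_sqrt (h : x ^ 2 < b * x + c) :
    |2 * x - b| < √(b ^ 2 + 4 * c) := by
  apply Real.lt_sqrt_of_sq_lt
  rw [sq_abs]
  linarith

theorem lowerRoot_lt (h : x ^ 2 < b * x + c) : lowerRoot b c < x := by
  have := (abs_lt.mp (abs_two_mul_sub_lt_sqrt h)).1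
  unfold lowerRoot
  linarith

theorem lt_upperRoot (h : x ^ 2 < b * x + c) : x < upperRoot b c := by
  have := (abs_lt.mp (abs_two_mul_sub_lt_sqrt h)).2
  unfold upperRoot
  linarith

theorem lowerRoot_antitone (b : ℝ) : Antitone (lowerRoot b) := by
  intro c d hcd
  unfold lowerRoot
  gcongr

end QuadraticRoots

section ThresholdFactor

variable {R : Type*} [CommRing R]

/-- The common form of the numerator (`t = 0`) and the denominator (`t = 1`) of the threshold. -/
def thresholdFactor (η δ1 δ3 γ2 t a : R) : R :=
  (1 + η) * (t - δ1) * (γ2 - δ3) + (1 - a) * (γ2 - t) * (δ1 - δ3)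

theorem thresholdFactor_zero (η δ1 δ3 γ2 a : R) :
    thresholdFactor η δ1 δ3 γ2 0 a =
      δ1 * δ3 * (1 + η) - (δ3 + η * δ1) * γ2 - a * (δ1 - δ3) * γ2 := by
  unfold thresholdFactor
  ring

theorem thresholdFactor_one (η δ1 δ3 γ2 a : R) :
    thresholdFactor η δ1 δ3 γ2 1 a =
      (1 + η) * (δ1 * δ3 + γ2) - (δ3 + η * δ1) * γ2 - (δ1 + η * δ3) -
        a * (γ2 - 1) * (δ1 - δ3) := by
  unfold thresholdFactor
  ring

theorem thresholdFactor_pos [LinearOrder R] [IsStrictOrderedRing R] {η δ1 δ3 γ2 t a : R}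
    (hη : -1 < η) (hδ : δ3 ≤ δ1) (hδt : δ1 < t) (htγ : t ≤ γ2) (ha : a ≤ 1) :
    0 < thresholdFactor η δ1 δ3 γ2 t a := by
  have h_main : 0 < (1 + η) * (t - δ1) * (γ2 - δ3) :=
    mul_pos (mul_pos (neg_lt_iff_pos_add'.mp hη) (sub_pos.mpr hδt))
      (sub_pos.mpr (hδ.trans_lt (hδt.trans_le htγ)))
  have h_correction : 0 ≤ (1 - a) * (γ2 - t) * (δ1 - δ3) :=
    mul_nonneg (mul_nonneg (sub_nonneg.mpr ha) (sub_nonneg.mpr htγ)) (sub_nonneg.mpr hδ)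
  exact add_pos_of_pos_of_nonneg h_main h_correction

end ThresholdFactor

theorem stmt_3 (μ1 μ2 ρ σ lam0 lam1 K βs βb η a0 a1 m δ1 δ3 γ2 k : ℝ)
    (hσ : 0 < σ) (hlam0 : 0 < lam0) (hlam1 : 0 < lam1)
    (hμ1 : μ1 < ρ) (hμ2 : μ2 < ρ)
    (hm : m = 1 + (μ1 - μ2) / σ)
    (hK0 : 0 < K) (hK1 : K < 1) (hβs : βs = 1 - K) (hβb : βb = 1 + K)
    (hη : η = lam0 / lam1) (ha0 : a0 = lam0 / (ρ + lam0 - μ1)) (ha1 : a1 = lam0 / (ρ + lam0 - μ2))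
    (hδ1 : δ1 = (m - Real.sqrt (m ^ 2 + 4 * (ρ - μ1) / σ)) / 2)
    (hδ3 : δ3 = (m - Real.sqrt (m ^ 2 + 4 * (ρ + lam0 + lam1 - μ1) / σ)) / 2)
    (hγ2 : γ2 = (m + Real.sqrt (m ^ 2 + 4 * (ρ + lam0 - μ1) / σ)) / 2)
    (hk : k = (δ1 * δ3 * (1 + η) - (δ3 + η * δ1) * γ2 - a0 * (δ1 - δ3) * γ2) /
      ((1 + η) * (δ1 * δ3 + γ2) - (δ3 + η * δ1) * γ2 - (δ1 + η * δ3) - a1 * (γ2 - 1) * (δ1 - δ3)) *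
      (βs / βb)) :
    0 < k := by
  rw [mul_div_assoc, ← lowerRoot] at hδ1 hδ3
  rw [mul_div_assoc, ← upperRoot] at hγ2
  rw [← thresholdFactor_zero, ← thresholdFactor_one] at hk
  have h_neg_one_lt_η : -1 < η := by linarith [div_pos hlam0 hlam1]
  have ha0_le_one : a0 ≤ 1 := ha0 ▸ div_le_one_of_le₀ (by linarith) (by linarith)
  have ha1_le_one : a1 ≤ 1 := ha1 ▸ div_le_one_of_le₀ (by linarith) (by linarith)
  have hδ3_le_δ1 : δ3 ≤ δ1 := by
    rw [hδ1, hδ3]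
    exact lowerRoot_antitone m (div_le_div_of_nonneg_right (by linarith) hσ.le)
  have hδ1_neg : δ1 < 0 := by
    rw [hδ1]
    exact lowerRoot_lt (by simpa using div_pos (sub_pos.mpr hμ1) hσ)
  have h_one_lt_γ2 : 1 < γ2 := by
    have h_sum : m * 1 + (ρ + lam0 - μ1) / σ = 1 + (ρ + lam0 - μ2) / σ := by rw [hm]; ring
    rw [hγ2]
    exact lt_upperRoot (by rw [h_sum]; linarith [div_pos (show 0 < ρ + lam0 - μ2 by linarith) hσ])
  have h_num := thresholdFactor_pos h_neg_one_lt_η hδ3_le_δ1 hδ1_neg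
    (zero_le_one.trans h_one_lt_γ2.le) ha0_le_one
  have h_den := thresholdFactor_pos h_neg_one_lt_η hδ3_le_δ1 (hδ1_neg.trans one_pos)
    h_one_lt_γ2.le ha1_le_one
  have h_cost : 0 < βs / βb := div_pos (by linarith) (by linarith)
  exact hk ▸ mul_pos (div_pos h_num h_den) h_cost
end

section
/- The threshold k and constants C1, C3, C2 satisfy the four smooth-fit equations: β_s − β_b k = C1 k^{δ1} + C3 k^{δ3}; −β_b k = C1 δ1 k^{δ1} + C3 δ3 k^{δ3}; C2 k^{γ2} + a0 β_s − a1 β_b k = C1 k^{δ1} − η C3 k^{δ3}; and C2 γ2 k^{γ2} − a1 β_b k = δ1 C1 k^{δ1} − η δ3 C3 k^{δ3}. -/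
/-!
With `s = β_s` and `y = β_b k`, the four equations are linear in `X = C1 k^δ1`, `Y = C3 k^δ3` and
`Z = C2 k^γ2`. The first two have determinant `δ3 - δ1` in `X`, `Y`, and `C1`, `C3` are their Cramer
solution. Eliminating `Z` from the last two leaves a single equation `D y = N s`, which is the
formula for `k`; the third equation then reads `D Z = M s`, which is the formula for `C2`. The
divisions are legitimate because `δ3 < δ1 < 0 ≤ γ2`, `η ≥ 0` and `a0, a1 ∈ [0, 1]` make `N` and `D`
sums of nonnegative terms, one of which is positive.
-/

section LinearSystem

variable {R : Type*} [CommRing R]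

/-- The numerator `N` of the threshold `k = N / D * (β_s / β_b)`. -/
def thresholdNum (δ₁ δ₃ γ η a₀ : R) : R :=
  δ₁ * δ₃ * (1 + η) - (δ₃ + η * δ₁) * γ - a₀ * (δ₁ - δ₃) * γ

/-- The denominator `D` of the threshold `k = N / D * (β_s / β_b)`; it is also the denominator of
`C2 k ^ γ2 = M * β_s / D`. -/
def thresholdDen (δ₁ δ₃ γ η a₁ : R) : R :=
  (1 + η) * (δ₁ * δ₃ + γ) - (δ₃ + η * δ₁) * γ - (δ₁ + η * δ₃) - a₁ * (γ - 1) * (δ₁ - δ₃)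

/-- The numerator `M` of `C2 k ^ γ2 = M * β_s / D`. -/
def growthCoeffNum (δ₁ δ₃ η a₀ a₁ : R) : R :=
  (1 - a₀) * (η + a₁) * (1 - δ₁) * (-δ₃) + (1 - a₁) * (η + a₀) * (1 - δ₃) * δ₁

theorem thresholdDen_eq (δ₁ δ₃ γ η a₁ : R) :
    thresholdDen δ₁ δ₃ γ η a₁ = (1 + η) * (δ₁ * δ₃ + γ) - δ₁ * ((a₁ + η) * γ + (1 - a₁)) -
      δ₃ * ((a₁ + η) + γ * (1 - a₁)) := by
  unfold thresholdDen
  ring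

variable [IsDomain R] {δ₁ δ₃ γ η a₀ a₁ s y v w X Y : R}

theorem value_and_slope_fit (hδ : δ₁ ≠ δ₃) (hX : (δ₁ - δ₃) * X = w - δ₃ * v)
    (hY : (δ₁ - δ₃) * Y = δ₁ * v - w) : v = X + Y ∧ w = δ₁ * X + δ₃ * Y := by
  have hδ' : δ₁ - δ₃ ≠ 0 := sub_ne_zero.mpr hδ
  constructor <;> apply mul_left_cancel₀ hδ'
  · linear_combination -hX - hY
  · linear_combination -δ₁ * hX - δ₃ * hY

-- The third equation gives `Z = X - η Y - a₀ s + a₁ y`; the left side is the fourth with this `Z`.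
theorem eliminated_fit_iff_threshold (hδ : δ₁ ≠ δ₃)
    (hX : (δ₁ - δ₃) * X = -δ₃ * s + (δ₃ - 1) * y) (hY : (δ₁ - δ₃) * Y = δ₁ * s - (δ₁ - 1) * y) :
    γ * (X - η * Y - a₀ * s + a₁ * y) = δ₁ * X - η * δ₃ * Y + a₁ * y ↔
      thresholdDen δ₁ δ₃ γ η a₁ * y = thresholdNum δ₁ δ₃ γ η a₀ * s := by
  have hδ' : δ₁ - δ₃ ≠ 0 := sub_ne_zero.mpr hδ
  have hresidual :
      (δ₁ - δ₃) * (γ * (X - η * Y - a₀ * s + a₁ * y) - (δ₁ * X - η * δ₃ * Y + a₁ * y)) =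
        thresholdNum δ₁ δ₃ γ η a₀ * s - thresholdDen δ₁ δ₃ γ η a₁ * y := by
    unfold thresholdNum thresholdDen
    linear_combination (γ - δ₁) * hX - η * (γ - δ₃) * hY
  rw [← sub_eq_zero, ← mul_eq_zero_iff_left hδ', hresidual, sub_eq_zero, eq_comm]

theorem thresholdDen_mul_growth_term (hδ : δ₁ ≠ δ₃)
    (hX : (δ₁ - δ₃) * X = -δ₃ * s + (δ₃ - 1) * y) (hY : (δ₁ - δ₃) * Y = δ₁ * s - (δ₁ - 1) * y)
    (hy : thresholdDen δ₁ δ₃ γ η a₁ * y = thresholdNum δ₁ δ₃ γ η a₀ * s) :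
    thresholdDen δ₁ δ₃ γ η a₁ * (X - η * Y - a₀ * s + a₁ * y) =
      growthCoeffNum δ₁ δ₃ η a₀ a₁ * s := by
  have hδ' : δ₁ - δ₃ ≠ 0 := sub_ne_zero.mpr hδ
  apply mul_left_cancel₀ hδ'
  calc (δ₁ - δ₃) * (thresholdDen δ₁ δ₃ γ η a₁ * (X - η * Y - a₀ * s + a₁ * y))
    _ = thresholdDen δ₁ δ₃ γ η a₁ * (-(δ₃ + η * δ₁ + a₀ * (δ₁ - δ₃))) * s +
        (δ₃ - 1 + η * (δ₁ - 1) + a₁ * (δ₁ - δ₃)) * (thresholdDen δ₁ δ₃ γ η a₁ * y) := by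
      linear_combination thresholdDen δ₁ δ₃ γ η a₁ * (hX - η * hY)
    _ = (δ₁ - δ₃) * (growthCoeffNum δ₁ δ₃ η a₀ a₁ * s) := by
      rw [hy]
      unfold thresholdDen thresholdNum growthCoeffNum
      ring

end LinearSystem

section Positivity

variable {R : Type*} [CommRing R] [LinearOrder R] [IsStrictOrderedRing R] {δ₁ δ₃ γ η a₀ a₁ : R}

theorem thresholdNum_pos (hδ₁ : δ₁ < 0) (hδ₃ : δ₃ < 0) (hγ : 0 ≤ γ) (hη : 0 ≤ η)
    (ha₀ : a₀ ∈ Set.Icc 0 1) : 0 < thresholdNum δ₁ δ₃ γ η a₀ := by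
  have hprod : 0 < δ₁ * δ₃ * (1 + η) := mul_pos (mul_pos_of_neg_of_neg hδ₁ hδ₃) (by linarith)
  have h₁ : δ₁ * (η + a₀) ≤ 0 := mul_nonpos_of_nonpos_of_nonneg hδ₁.le (add_nonneg hη ha₀.1)
  have h₃ : δ₃ * (1 - a₀) ≤ 0 := mul_nonpos_of_nonpos_of_nonneg hδ₃.le (sub_nonneg.mpr ha₀.2)
  calc 0 < δ₁ * δ₃ * (1 + η) - γ * (δ₁ * (η + a₀) + δ₃ * (1 - a₀)) :=
        sub_pos.mpr ((mul_nonpos_of_nonneg_of_nonpos hγ (add_nonpos h₁ h₃)).trans_lt hprod)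
    _ = thresholdNum δ₁ δ₃ γ η a₀ := by unfold thresholdNum; ring

theorem thresholdDen_pos (hδ₁ : δ₁ < 0) (hδ₃ : δ₃ < 0) (hγ : 0 ≤ γ) (hη : 0 ≤ η)
    (ha₁ : a₁ ∈ Set.Icc 0 1) : 0 < thresholdDen δ₁ δ₃ γ η a₁ := by
  have haη : 0 ≤ a₁ + η := add_nonneg ha₁.1 hη
  have ha₁' : 0 ≤ 1 - a₁ := sub_nonneg.mpr ha₁.2
  have hprod : 0 < (1 + η) * (δ₁ * δ₃ + γ) :=
    mul_pos (by linarith) (add_pos_of_pos_of_nonneg (mul_pos_of_neg_of_neg hδ₁ hδ₃) hγ)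
  have h₁ : δ₁ * ((a₁ + η) * γ + (1 - a₁)) ≤ 0 :=
    mul_nonpos_of_nonpos_of_nonneg hδ₁.le (by positivity)
  have h₃ : δ₃ * ((a₁ + η) + γ * (1 - a₁)) ≤ 0 :=
    mul_nonpos_of_nonpos_of_nonneg hδ₃.le (by positivity)
  rw [thresholdDen_eq]
  linarith

end Positivity

section CharacteristicRoots

variable {m d e : ℝ}

theorem half_sub_sqrt_neg (hd : 0 < d) : (m - √(m ^ 2 + d)) / 2 < 0 := by
  have : m < √(m ^ 2 + d) := Real.lt_sqrt_of_sq_lt (lt_add_of_pos_right _ hd)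
  linarith

theorem half_add_sqrt_pos (hd : 0 < d) : 0 < (m + √(m ^ 2 + d)) / 2 := by
  have := half_sub_sqrt_neg (m := -m) hd
  rw [neg_sq] at this
  linarith

theorem half_sub_sqrt_lt_half_sub_sqrt (hd : 0 ≤ d) (hde : d < e) :
    (m - √(m ^ 2 + e)) / 2 < (m - √(m ^ 2 + d)) / 2 := by
  have : √(m ^ 2 + d) < √(m ^ 2 + e) := Real.sqrt_lt_sqrt (by positivity) (by gcongr)
  linarith

end CharacteristicRoots

theorem mul_mul_rpow_of_eq_div {b c k p x : ℝ} (hk : 0 < k) (hb : b ≠ 0)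
    (hc : c = x / (b * k ^ p)) : b * (c * k ^ p) = x := by
  have := (eq_div_iff (mul_ne_zero hb (Real.rpow_pos_of_pos hk p).ne')).mp hc
  linear_combination this

theorem stmt_14_general {βs βb η a0 a1 δ1 δ3 γ2 k C1 C2 C3 : ℝ}
    (hβs : 0 < βs) (hβb : 0 < βb) (hη : 0 ≤ η) (ha0 : a0 ∈ Set.Icc 0 1) (ha1 : a1 ∈ Set.Icc 0 1)
    (hδ31 : δ3 < δ1) (hδ1 : δ1 < 0) (hγ2 : 0 ≤ γ2)
    (hk : k = (δ1 * δ3 * (1 + η) - (δ3 + η * δ1) * γ2 - a0 * (δ1 - δ3) * γ2) /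
      ((1 + η) * (δ1 * δ3 + γ2) - (δ3 + η * δ1) * γ2 - (δ1 + η * δ3) -
        a1 * (γ2 - 1) * (δ1 - δ3)) * (βs / βb))
    (hC1 : C1 = (-δ3 * βs + (δ3 - 1) * βb * k) / ((δ1 - δ3) * k ^ δ1))
    (hC3 : C3 = (δ1 * βs - (δ1 - 1) * βb * k) / ((δ1 - δ3) * k ^ δ3))
    (hC2 : C2 =
      ((1 - a0) * (η + a1) * (1 - δ1) * (-δ3) + (1 - a1) * (η + a0) * (1 - δ3) * δ1) * βs /
        (((1 + η) * (δ1 * δ3 + γ2) - δ1 * ((a1 + η) * γ2 + (1 - a1)) -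
          δ3 * ((a1 + η) + γ2 * (1 - a1))) * k ^ γ2)) :
    βs - βb * k = C1 * k ^ δ1 + C3 * k ^ δ3 ∧
      -(βb * k) = C1 * δ1 * k ^ δ1 + C3 * δ3 * k ^ δ3 ∧
      C2 * k ^ γ2 + a0 * βs - a1 * βb * k = C1 * k ^ δ1 - η * C3 * k ^ δ3 ∧
      C2 * γ2 * k ^ γ2 - a1 * βb * k = δ1 * C1 * k ^ δ1 - η * δ3 * C3 * k ^ δ3 := by
  have hδ : δ1 - δ3 ≠ 0 := sub_ne_zero.mpr hδ31.ne'
  have hN : 0 < thresholdNum δ1 δ3 γ2 η a0 := thresholdNum_pos hδ1 (hδ31.trans hδ1) hγ2 hη ha0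
  have hD : 0 < thresholdDen δ1 δ3 γ2 η a1 := thresholdDen_pos hδ1 (hδ31.trans hδ1) hγ2 hη ha1
  change k = thresholdNum δ1 δ3 γ2 η a0 / thresholdDen δ1 δ3 γ2 η a1 * (βs / βb) at hk
  have hk0 : 0 < k := hk ▸ mul_pos (div_pos hN hD) (div_pos hβs hβb)
  have hy : thresholdDen δ1 δ3 γ2 η a1 * (βb * k) = thresholdNum δ1 δ3 γ2 η a0 * βs := by
    rw [hk]
    field_simp
  rw [mul_assoc _ βb k] at hC1 hC3
  have hX : (δ1 - δ3) * (C1 * k ^ δ1) = -δ3 * βs + (δ3 - 1) * (βb * k) :=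
    mul_mul_rpow_of_eq_div hk0 hδ hC1
  have hY : (δ1 - δ3) * (C3 * k ^ δ3) = δ1 * βs - (δ1 - 1) * (βb * k) :=
    mul_mul_rpow_of_eq_div hk0 hδ hC3
  rw [← thresholdDen_eq] at hC2
  have hZ : C2 * k ^ γ2 = C1 * k ^ δ1 - η * (C3 * k ^ δ3) - a0 * βs + a1 * (βb * k) :=
    mul_left_cancel₀ hD.ne' <| (mul_mul_rpow_of_eq_div hk0 hD.ne' hC2).trans
      (thresholdDen_mul_growth_term hδ31.ne' hX hY hy).symm
  have helim := (eliminated_fit_iff_threshold hδ31.ne' hX hY).mpr hy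
  have ⟨hvalue, hslope⟩ : βs - βb * k = C1 * k ^ δ1 + C3 * k ^ δ3 ∧
      -(βb * k) = δ1 * (C1 * k ^ δ1) + δ3 * (C3 * k ^ δ3) :=
    value_and_slope_fit hδ31.ne' (by linear_combination hX) (by linear_combination hY)
  refine ⟨hvalue, ?_, ?_, ?_⟩
  · linear_combination hslope
  · linear_combination hZ
  · linear_combination γ2 * hZ + helim

theorem stmt_14 (μ1 μ2 ρ σ lam0 lam1 K βs βb η a0 a1 m δ1 δ3 γ2 k C1 C2 C3 : ℝ)
    (hσ : 0 < σ) (hlam0 : 0 < lam0) (hlam1 : 0 < lam1)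
    (hμ1 : μ1 < ρ) (hμ2 : μ2 < ρ)
    (hm : m = 1 + (μ1 - μ2) / σ)
    (hK0 : 0 < K) (hK1 : K < 1) (hβs : βs = 1 - K) (hβb : βb = 1 + K)
    (hη : η = lam0 / lam1) (ha0 : a0 = lam0 / (ρ + lam0 - μ1)) (ha1 : a1 = lam0 / (ρ + lam0 - μ2))
    (hδ1 : δ1 = (m - Real.sqrt (m ^ 2 + 4 * (ρ - μ1) / σ)) / 2)
    (hδ3 : δ3 = (m - Real.sqrt (m ^ 2 + 4 * (ρ + lam0 + lam1 - μ1) / σ)) / 2)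
    (hγ2 : γ2 = (m + Real.sqrt (m ^ 2 + 4 * (ρ + lam0 - μ1) / σ)) / 2)
    (hk : k = (δ1 * δ3 * (1 + η) - (δ3 + η * δ1) * γ2 - a0 * (δ1 - δ3) * γ2) /
      ((1 + η) * (δ1 * δ3 + γ2) - (δ3 + η * δ1) * γ2 - (δ1 + η * δ3) - a1 * (γ2 - 1) * (δ1 - δ3)) *
      (βs / βb))
    (hC1 : C1 = (-δ3 * βs + (δ3 - 1) * βb * k) / ((δ1 - δ3) * k ^ δ1))
    (hC3 : C3 = (δ1 * βs - (δ1 - 1) * βb * k) / ((δ1 - δ3) * k ^ δ3))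
    (hC2 : C2 = ((1 - a0) * (η + a1) * (1 - δ1) * (-δ3) + (1 - a1) * (η + a0) * (1 - δ3) * δ1) * βs /
      (((1 + η) * (δ1 * δ3 + γ2) - δ1 * ((a1 + η) * γ2 + (1 - a1)) - δ3 * ((a1 + η) + γ2 * (1 - a1))) *
        k ^ γ2)) :
    βs - βb * k = C1 * k ^ δ1 + C3 * k ^ δ3 ∧
      -(βb * k) = C1 * δ1 * k ^ δ1 + C3 * δ3 * k ^ δ3 ∧
      C2 * k ^ γ2 + a0 * βs - a1 * βb * k = C1 * k ^ δ1 - η * C3 * k ^ δ3 ∧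
      C2 * γ2 * k ^ γ2 - a1 * βb * k = δ1 * C1 * k ^ δ1 - η * δ3 * C3 * k ^ δ3 := by
  subst hη ha0 ha1 hδ1 hδ3 hγ2
  have hd : 0 < 4 * (ρ - μ1) / σ := div_pos (by linarith) hσ
  exact stmt_14_general (by linarith) (by linarith) (by positivity)
    (unitInterval.div_mem hlam0.le (by linarith) (by linarith))
    (unitInterval.div_mem hlam0.le (by linarith) (by linarith))
    (half_sub_sqrt_lt_half_sub_sqrt hd.le (by gcongr; linarith)) (half_sub_sqrt_neg hd)
    (half_add_sqrt_pos (div_pos (by linarith) hσ)).le hk hC1 hC3 hC2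
end

section
/- The function ψ(y) = [ρ + (1−a0)λ1 − μ1] β_s − [ρ + (1−a1)λ1 − μ2] β_b y − λ1 C2 y^{γ2} is nonnegative for all y in [0, k]. -/
/-!
Let `δ₁, δ₂, δ₃` be the negative roots of `σ z (z - m) = c` for `c = ρ - μ1`, `ρ + λ0 - μ1`,
`ρ + λ0 + λ1 - μ1`, so that `γ2 = m - δ₂`. Replacing `μ1` by `μ2` translates all these roots by
`-1`, and in particular carries the numerator of `k` to its denominator. Writing every parameter
through the roots, `k` and `C2 k ^ γ2` become quotients of products of root differences, from which
`C2 > 0` and `ψ k = σ β_s δ₁ δ₃ / (-δ₂) > 0`. As `ψ` is decreasing on `[0, ∞)`, it is positive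
on `[0, k]`.
-/

lemma antitoneOn_sub_mul_sub_mul_rpow {B D γ : ℝ} (A : ℝ) (hB : 0 ≤ B) (hD : 0 ≤ D)
    (hγ : 0 ≤ γ) : AntitoneOn (fun y : ℝ ↦ A - B * y - D * y ^ γ) (Set.Ici 0) := by
  intro y (hy : 0 ≤ y) z _ hyz
  dsimp only
  gcongr

/-- The smaller root of `z ^ 2 - m * z - c`, negative when `0 < c`. -/
noncomputable def negRoot (m c : ℝ) : ℝ := (m - √(m ^ 2 + 4 * c)) / 2

lemma sq_negRoot {m c : ℝ} (h : 0 ≤ m ^ 2 + 4 * c) : negRoot m c ^ 2 = m * negRoot m c + c := by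
  unfold negRoot
  linear_combination Real.sq_sqrt h / 4

lemma negRoot_lt {m c z : ℝ} (h : z ^ 2 < m * z + c) : negRoot m c < z := by
  have : m - 2 * z < √(m ^ 2 + 4 * c) := Real.lt_sqrt_of_sq_lt (by linarith)
  unfold negRoot
  linarith

lemma lt_sub_negRoot {m c z : ℝ} (h : z ^ 2 < m * z + c) : z < m - negRoot m c := by
  have : 2 * z - m < √(m ^ 2 + 4 * c) := Real.lt_sqrt_of_sq_lt (by linarith)
  unfold negRoot
  linarith

/-- The common shape of the numerator and the denominator of the threshold `k`: the numerator is
`fitForm η a0 δ1 δ3 γ2`, the denominator `fitForm η a1 (δ1 - 1) (δ3 - 1) (γ2 - 1)`. -/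
def fitForm (η a δ₁ δ₃ γ : ℝ) : ℝ :=
  δ₁ * δ₃ * (1 + η) - (δ₃ + η * δ₁) * γ - a * (δ₁ - δ₃) * γ

lemma fitForm_sub_one (η a δ₁ δ₃ γ : ℝ) :
    fitForm η a (δ₁ - 1) (δ₃ - 1) (γ - 1) =
      (1 + η) * (δ₁ * δ₃ + γ) - (δ₃ + η * δ₁) * γ - (δ₁ + η * δ₃) - a * (γ - 1) * (δ₁ - δ₃) := by
  unfold fitForm
  ring

/-- The discount rates `p`, `p + lam0`, `p + lam0 + lam1` of a regime expressed through the negative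
roots `δ₁ > δ₂ > δ₃` of the quadratics `σ * z * (z - m) = c`; here `γ = m - δ₂`, and
`δ₂ + γ - δᵢ` is the positive root conjugate to `δᵢ`. -/
structure IsRegimeRoots (σ p lam0 lam1 δ₁ δ₂ δ₃ γ : ℝ) : Prop where
  sigma_pos : 0 < σ
  lt₃₂ : δ₃ < δ₂
  lt₂₁ : δ₂ < δ₁
  neg₁ : δ₁ < 0
  conj_pos₁ : 0 < δ₂ + γ - δ₁
  rate_eq₁ : p = σ * (-δ₁ * (δ₂ + γ - δ₁))
  rate_eq₂ : p + lam0 = σ * (-δ₂ * γ)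
  rate_eq₃ : p + lam0 + lam1 = σ * (-δ₃ * (δ₂ + γ - δ₃))

lemma isRegimeRoots_negRoot {σ p lam0 lam1 : ℝ} (m : ℝ) (hσ : 0 < σ) (hp : 0 < p)
    (hlam0 : 0 < lam0) (hlam1 : 0 < lam1) :
    IsRegimeRoots σ p lam0 lam1 (negRoot m (p / σ)) (negRoot m ((p + lam0) / σ))
      (negRoot m ((p + lam0 + lam1) / σ)) (m - negRoot m ((p + lam0) / σ)) := by
  have sq_root {c : ℝ} (hc : 0 < c) :
      negRoot m (c / σ) ^ 2 = m * negRoot m (c / σ) + c / σ :=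
    sq_negRoot (by positivity)
  have rate_eq {c : ℝ} (hc : 0 < c) :
      c = σ * (negRoot m (c / σ) * (negRoot m (c / σ) - m)) := by
    have : c = σ * (c / σ) := by field_simp
    linear_combination this - σ * sq_root hc
  have root_lt_root {c d : ℝ} (hc : 0 < c) (hcd : c < d) :
      negRoot m (d / σ) < negRoot m (c / σ) := by
    have : c / σ < d / σ := by gcongr
    exact negRoot_lt (by linarith [sq_root hc])
  have zero_sq_lt : (0 : ℝ) ^ 2 < m * 0 + p / σ := by simpa using div_pos hp hσ
  exact
    { sigma_pos := hσ
      lt₃₂ := root_lt_root (by positivity) (by linarith)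
      lt₂₁ := root_lt_root hp (by linarith)
      neg₁ := negRoot_lt zero_sq_lt
      conj_pos₁ := by simpa using lt_sub_negRoot zero_sq_lt
      rate_eq₁ := by linear_combination rate_eq hp
      rate_eq₂ := by linear_combination rate_eq (add_pos hp hlam0)
      rate_eq₃ := by linear_combination rate_eq (add_pos (add_pos hp hlam0) hlam1) }

namespace IsRegimeRoots

variable {σ p q lam0 lam1 δ₁ δ₂ δ₃ γ : ℝ}

lemma sub_one (h : IsRegimeRoots σ p lam0 lam1 δ₁ δ₂ δ₃ γ) (hq : 0 < q)
    (hpq : q = p + σ * (δ₂ + γ - 1)) :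
    IsRegimeRoots σ q lam0 lam1 (δ₁ - 1) (δ₂ - 1) (δ₃ - 1) (γ - 1) where
  sigma_pos := h.sigma_pos
  lt₃₂ := by linarith [h.lt₃₂]
  lt₂₁ := by linarith [h.lt₂₁]
  neg₁ := by linarith [h.neg₁]
  conj_pos₁ := by
    have hq_eq : q = σ * (1 - δ₁) * (δ₂ - 1 + (γ - 1) - (δ₁ - 1)) := by
      linear_combination hpq + h.rate_eq₁
    have : 0 < σ * (1 - δ₁) := mul_pos h.sigma_pos (by linarith [h.neg₁])
    exact pos_of_mul_pos_right (hq_eq ▸ hq) this.le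
  rate_eq₁ := by linear_combination hpq + h.rate_eq₁
  rate_eq₂ := by linear_combination hpq + h.rate_eq₂
  rate_eq₃ := by linear_combination hpq + h.rate_eq₃

lemma gamma_pos (h : IsRegimeRoots σ p lam0 lam1 δ₁ δ₂ δ₃ γ) : 0 < γ := by
  linarith [h.conj_pos₁, h.lt₂₁]

lemma neg₂ (h : IsRegimeRoots σ p lam0 lam1 δ₁ δ₂ δ₃ γ) : δ₂ < 0 := h.lt₂₁.trans h.neg₁

lemma neg₃ (h : IsRegimeRoots σ p lam0 lam1 δ₁ δ₂ δ₃ γ) : δ₃ < 0 := h.lt₃₂.trans h.neg₂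

lemma conj_pos₃ (h : IsRegimeRoots σ p lam0 lam1 δ₁ δ₂ δ₃ γ) : 0 < δ₂ + γ - δ₃ := by
  linarith [h.gamma_pos, h.lt₃₂]

lemma lam0_eq (h : IsRegimeRoots σ p lam0 lam1 δ₁ δ₂ δ₃ γ) :
    lam0 = σ * ((δ₁ - δ₂) * (γ - δ₁)) := by
  linear_combination h.rate_eq₂ - h.rate_eq₁

lemma lam1_eq (h : IsRegimeRoots σ p lam0 lam1 δ₁ δ₂ δ₃ γ) :
    lam1 = σ * ((δ₂ - δ₃) * (γ - δ₃)) := by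
  linear_combination h.rate_eq₃ - h.rate_eq₂

lemma lam0_div_lam1 (h : IsRegimeRoots σ p lam0 lam1 δ₁ δ₂ δ₃ γ) :
    lam0 / lam1 = (δ₁ - δ₂) * (γ - δ₁) / ((δ₂ - δ₃) * (γ - δ₃)) := by
  rw [h.lam0_eq, h.lam1_eq, mul_div_mul_left _ _ h.sigma_pos.ne']

lemma lam0_div_rate (h : IsRegimeRoots σ p lam0 lam1 δ₁ δ₂ δ₃ γ) :
    lam0 / (p + lam0) = (δ₁ - δ₂) * (γ - δ₁) / (-δ₂ * γ) := by
  rw [h.rate_eq₂, h.lam0_eq, mul_div_mul_left _ _ h.sigma_pos.ne']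

lemma one_sub_lam0_div_rate (h : IsRegimeRoots σ p lam0 lam1 δ₁ δ₂ δ₃ γ) :
    1 - lam0 / (p + lam0) = δ₁ * (δ₂ + γ - δ₁) / (δ₂ * γ) := by
  have := h.neg₂.ne
  have := h.gamma_pos.ne'
  rw [h.lam0_div_rate]
  field_simp
  ring

lemma rate_add_mul_lam1 (h : IsRegimeRoots σ p lam0 lam1 δ₁ δ₂ δ₃ γ) :
    p + (1 - lam0 / (p + lam0)) * lam1 =
      σ * (δ₁ * δ₃ * ((δ₂ + γ - δ₁) * (δ₂ + γ - δ₃)) / (-δ₂ * γ)) := by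
  have := h.neg₂.ne
  have := h.gamma_pos.ne'
  rw [h.one_sub_lam0_div_rate, h.rate_eq₁, h.lam1_eq]
  field_simp
  ring

lemma rate_add_mul_lam1_pos (h : IsRegimeRoots σ p lam0 lam1 δ₁ δ₂ δ₃ γ) :
    0 < p + (1 - lam0 / (p + lam0)) * lam1 := by
  rw [h.rate_add_mul_lam1]
  exact mul_pos h.sigma_pos (div_pos
    (mul_pos (mul_pos_of_neg_of_neg h.neg₁ h.neg₃) (mul_pos h.conj_pos₁ h.conj_pos₃))
    (mul_pos (neg_pos.2 h.neg₂) h.gamma_pos))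

lemma fitForm_eq (h : IsRegimeRoots σ p lam0 lam1 δ₁ δ₂ δ₃ γ) :
    fitForm (lam0 / lam1) (lam0 / (p + lam0)) δ₁ δ₃ γ =
      δ₁ * δ₃ * ((δ₁ - δ₃) * (γ - δ₁)) / (-δ₂ * (δ₂ - δ₃)) := by
  have := h.neg₂.ne
  have := h.gamma_pos.ne'
  have := (sub_pos.2 h.lt₃₂).ne'
  have : γ - δ₃ ≠ 0 := by linarith [h.gamma_pos, h.neg₃]
  rw [fitForm, h.lam0_div_lam1, h.lam0_div_rate]
  field_simp
  ring

lemma fitForm_pos (h : IsRegimeRoots σ p lam0 lam1 δ₁ δ₂ δ₃ γ) :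
    0 < fitForm (lam0 / lam1) (lam0 / (p + lam0)) δ₁ δ₃ γ := by
  rw [h.fitForm_eq]
  exact div_pos
    (mul_pos (mul_pos_of_neg_of_neg h.neg₁ h.neg₃)
      (mul_pos (by linarith [h.lt₃₂, h.lt₂₁]) (by linarith [h.neg₁, h.gamma_pos])))
    (mul_pos (neg_pos.2 h.neg₂) (sub_pos.2 h.lt₃₂))

lemma lam0_div_lam1_add_div_rate (h : IsRegimeRoots σ p lam0 lam1 δ₁ δ₂ δ₃ γ) :
    lam0 / lam1 + lam0 / (p + lam0) =
      (δ₁ - δ₂) * (γ - δ₁) * (δ₃ * (δ₂ + γ - δ₃)) / ((δ₂ - δ₃) * (γ - δ₃) * (δ₂ * γ)) := by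
  have := h.neg₂.ne
  have := h.gamma_pos.ne'
  have := (sub_pos.2 h.lt₃₂).ne'
  have : γ - δ₃ ≠ 0 := by linarith [h.gamma_pos, h.neg₃]
  rw [h.lam0_div_lam1, h.lam0_div_rate]
  field_simp
  ring

lemma threshold_eq (h : IsRegimeRoots σ p lam0 lam1 δ₁ δ₂ δ₃ γ)
    (h' : IsRegimeRoots σ q lam0 lam1 (δ₁ - 1) (δ₂ - 1) (δ₃ - 1) (γ - 1)) :
    fitForm (lam0 / lam1) (lam0 / (p + lam0)) δ₁ δ₃ γ /
        fitForm (lam0 / lam1) (lam0 / (q + lam0)) (δ₁ - 1) (δ₃ - 1) (γ - 1) =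
      δ₁ * δ₃ * (δ₂ - 1) / ((δ₁ - 1) * (δ₃ - 1) * δ₂) := by
  have := h.neg₂.ne
  have := h'.neg₁.ne
  have := h'.neg₂.ne
  have := h'.neg₃.ne
  have := (sub_pos.2 h.lt₃₂).ne'
  have := (sub_pos.2 (h.lt₃₂.trans h.lt₂₁)).ne'
  have : γ - δ₁ ≠ 0 := by linarith [h.gamma_pos, h.neg₁]
  rw [h.fitForm_eq, h'.fitForm_eq]
  simp only [sub_sub_sub_cancel_right]
  field_simp

lemma lam1_mul_coeff_eq (h : IsRegimeRoots σ p lam0 lam1 δ₁ δ₂ δ₃ γ)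
    (h' : IsRegimeRoots σ q lam0 lam1 (δ₁ - 1) (δ₂ - 1) (δ₃ - 1) (γ - 1)) :
    lam1 * (((1 - lam0 / (p + lam0)) * (lam0 / lam1 + lam0 / (q + lam0)) * (1 - δ₁) * (-δ₃) +
        (1 - lam0 / (q + lam0)) * (lam0 / lam1 + lam0 / (p + lam0)) * (1 - δ₃) * δ₁) /
        fitForm (lam0 / lam1) (lam0 / (q + lam0)) (δ₁ - 1) (δ₃ - 1) (γ - 1)) =
      σ * (δ₁ * δ₃ * ((δ₁ - δ₂) * (δ₂ - δ₃)) / (-δ₂ * (γ * (γ - 1)))) := by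
  have := h.neg₂.ne
  have := h'.neg₁.ne
  have := h'.neg₂.ne
  have := h'.neg₃.ne
  have := h.gamma_pos.ne'
  have := h'.gamma_pos.ne'
  have := (sub_pos.2 h.lt₃₂).ne'
  have := (sub_pos.2 (h.lt₃₂.trans h.lt₂₁)).ne'
  have : γ - δ₁ ≠ 0 := by linarith [h.gamma_pos, h.neg₁]
  have : γ - δ₃ ≠ 0 := by linarith [h.gamma_pos, h.neg₃]
  rw [h.one_sub_lam0_div_rate, h'.one_sub_lam0_div_rate, h.lam0_div_lam1_add_div_rate,
    h'.lam0_div_lam1_add_div_rate, h'.fitForm_eq, h.lam1_eq]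
  simp only [sub_sub_sub_cancel_right]
  field_simp
  ring

lemma lam1_mul_coeff_pos (h : IsRegimeRoots σ p lam0 lam1 δ₁ δ₂ δ₃ γ)
    (h' : IsRegimeRoots σ q lam0 lam1 (δ₁ - 1) (δ₂ - 1) (δ₃ - 1) (γ - 1)) :
    0 < σ * (δ₁ * δ₃ * ((δ₁ - δ₂) * (δ₂ - δ₃)) / (-δ₂ * (γ * (γ - 1)))) :=
  mul_pos h.sigma_pos (div_pos
    (mul_pos (mul_pos_of_neg_of_neg h.neg₁ h.neg₃)
      (mul_pos (sub_pos.2 h.lt₂₁) (sub_pos.2 h.lt₃₂)))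
    (mul_pos (neg_pos.2 h.neg₂) (mul_pos h.gamma_pos h'.gamma_pos)))

-- Divided by `σ * (δ₁ * δ₃ / -δ₂)`, this is `F γ - F (γ - 1) - s * r / (γ * (γ - 1)) = 1`
-- with `s = δ₁ - δ₂`, `r = δ₂ - δ₃` and `F x = (x - s) * (x + r) / x = x + r - s - s * r / x`.
lemma value_at_threshold_eq (h : IsRegimeRoots σ p lam0 lam1 δ₁ δ₂ δ₃ γ)
    (h' : IsRegimeRoots σ q lam0 lam1 (δ₁ - 1) (δ₂ - 1) (δ₃ - 1) (γ - 1)) :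
    p + (1 - lam0 / (p + lam0)) * lam1 -
        (q + (1 - lam0 / (q + lam0)) * lam1) *
          (δ₁ * δ₃ * (δ₂ - 1) / ((δ₁ - 1) * (δ₃ - 1) * δ₂)) -
        σ * (δ₁ * δ₃ * ((δ₁ - δ₂) * (δ₂ - δ₃)) / (-δ₂ * (γ * (γ - 1)))) =
      σ * (δ₁ * δ₃ / -δ₂) := by
  have := h.neg₂.ne
  have := h'.neg₁.ne
  have := h'.neg₂.ne
  have := h'.neg₃.ne
  have := h.gamma_pos.ne'
  have := h'.gamma_pos.ne'
  rw [h.rate_add_mul_lam1, h'.rate_add_mul_lam1]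
  field_simp
  ring

theorem payoff_pos (h : IsRegimeRoots σ p lam0 lam1 δ₁ δ₂ δ₃ γ)
    (h' : IsRegimeRoots σ q lam0 lam1 (δ₁ - 1) (δ₂ - 1) (δ₃ - 1) (γ - 1))
    {η a b βs βb k C y : ℝ} (hη : η = lam0 / lam1) (ha : a = lam0 / (p + lam0))
    (hb : b = lam0 / (q + lam0)) (hβs : 0 < βs) (hβb : 0 < βb)
    (hk : k = fitForm η a δ₁ δ₃ γ / fitForm η b (δ₁ - 1) (δ₃ - 1) (γ - 1) * (βs / βb))
    (hC : C = ((1 - a) * (η + b) * (1 - δ₁) * (-δ₃) + (1 - b) * (η + a) * (1 - δ₃) * δ₁) * βs /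
      (fitForm η b (δ₁ - 1) (δ₃ - 1) (γ - 1) * k ^ γ))
    (hy0 : 0 ≤ y) (hyk : y ≤ k) :
    0 < (p + (1 - a) * lam1) * βs - (q + (1 - b) * lam1) * βb * y - lam1 * C * y ^ γ := by
  subst hη ha hb
  have hk0 : 0 < k := by
    rw [hk]
    exact mul_pos (div_pos h.fitForm_pos h'.fitForm_pos) (div_pos hβs hβb)
  have hkγ : 0 < k ^ γ := Real.rpow_pos_of_pos hk0 γ
  have hCk : lam1 * C * k ^ γ =
      σ * (δ₁ * δ₃ * ((δ₁ - δ₂) * (δ₂ - δ₃)) / (-δ₂ * (γ * (γ - 1)))) * βs := by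
    have := h'.fitForm_pos.ne'
    rw [← h.lam1_mul_coeff_eq h', hC]
    field_simp
  have hC0 : 0 ≤ lam1 * C := by
    refine nonneg_of_mul_nonneg_left (hCk ▸ ?_) hkγ
    exact (mul_pos (h.lam1_mul_coeff_pos h') hβs).le
  have hB0 : 0 ≤ (q + (1 - lam0 / (q + lam0)) * lam1) * βb :=
    (mul_pos h'.rate_add_mul_lam1_pos hβb).le
  have hβk : βb * k = δ₁ * δ₃ * (δ₂ - 1) / ((δ₁ - 1) * (δ₃ - 1) * δ₂) * βs := by
    rw [hk, h.threshold_eq h']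
    field_simp
  calc
    0 < σ * (δ₁ * δ₃ / -δ₂) * βs :=
      mul_pos (mul_pos h.sigma_pos
        (div_pos (mul_pos_of_neg_of_neg h.neg₁ h.neg₃) (neg_pos.2 h.neg₂))) hβs
    _ = (p + (1 - lam0 / (p + lam0)) * lam1) * βs -
          (q + (1 - lam0 / (q + lam0)) * lam1) * βb * k - lam1 * C * k ^ γ := by
      linear_combination hCk - βs * h.value_at_threshold_eq h' +
        (q + (1 - lam0 / (q + lam0)) * lam1) * hβk
    _ ≤ _ := antitoneOn_sub_mul_sub_mul_rpow _ hB0 hC0 h.gamma_pos.le hy0 hk0.le hyk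

end IsRegimeRoots

theorem stmt_17 (μ1 μ2 ρ σ lam0 lam1 K βs βb η a0 a1 m δ1 δ3 γ2 k C2 : ℝ) (ψ : ℝ → ℝ)
    (hσ : 0 < σ) (hlam0 : 0 < lam0) (hlam1 : 0 < lam1)
    (hμ1 : μ1 < ρ) (hμ2 : μ2 < ρ)
    (hm : m = 1 + (μ1 - μ2) / σ)
    (hK0 : 0 < K) (hK1 : K < 1) (hβs : βs = 1 - K) (hβb : βb = 1 + K)
    (hη : η = lam0 / lam1) (ha0 : a0 = lam0 / (ρ + lam0 - μ1)) (ha1 : a1 = lam0 / (ρ + lam0 - μ2))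
    (hδ1 : δ1 = (m - Real.sqrt (m ^ 2 + 4 * (ρ - μ1) / σ)) / 2)
    (hδ3 : δ3 = (m - Real.sqrt (m ^ 2 + 4 * (ρ + lam0 + lam1 - μ1) / σ)) / 2)
    (hγ2 : γ2 = (m + Real.sqrt (m ^ 2 + 4 * (ρ + lam0 - μ1) / σ)) / 2)
    (hk : k = (δ1 * δ3 * (1 + η) - (δ3 + η * δ1) * γ2 - a0 * (δ1 - δ3) * γ2) /
      ((1 + η) * (δ1 * δ3 + γ2) - (δ3 + η * δ1) * γ2 - (δ1 + η * δ3) - a1 * (γ2 - 1) * (δ1 - δ3)) *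
      (βs / βb))
    (hC2 : C2 = ((1 - a0) * (η + a1) * (1 - δ1) * (-δ3) + (1 - a1) * (η + a0) * (1 - δ3) * δ1) * βs /
      (((1 + η) * (δ1 * δ3 + γ2) - δ1 * ((a1 + η) * γ2 + (1 - a1)) - δ3 * ((a1 + η) + γ2 * (1 - a1))) *
        k ^ γ2))
    (hψ : ∀ y : ℝ, ψ y =
      (ρ + (1 - a0) * lam1 - μ1) * βs - (ρ + (1 - a1) * lam1 - μ2) * βb * y -
        lam1 * C2 * y ^ γ2) :
    ∀ y : ℝ, 0 ≤ y → y ≤ k → 0 ≤ ψ y := by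
  intro y hy0 hyk
  have h : IsRegimeRoots σ (ρ - μ1) lam0 lam1 δ1 (m - γ2) δ3 γ2 := by
    convert isRegimeRoots_negRoot m hσ (sub_pos.2 hμ1) hlam0 hlam1 using 1 <;>
      simp only [hδ1, hδ3, hγ2, negRoot] <;> ring_nf
  have h' : IsRegimeRoots σ (ρ - μ2) lam0 lam1 (δ1 - 1) (m - γ2 - 1) (δ3 - 1) (γ2 - 1) :=
    h.sub_one (sub_pos.2 hμ2) (by rw [hm]; field_simp; ring)
  have hk' : k = fitForm η a0 δ1 δ3 γ2 / fitForm η a1 (δ1 - 1) (δ3 - 1) (γ2 - 1) * (βs / βb) := by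
    rw [hk, fitForm_sub_one, fitForm]
  have hC2_denom : (1 + η) * (δ1 * δ3 + γ2) - δ1 * ((a1 + η) * γ2 + (1 - a1)) -
      δ3 * ((a1 + η) + γ2 * (1 - a1)) = fitForm η a1 (δ1 - 1) (δ3 - 1) (γ2 - 1) := by
    unfold fitForm
    ring
  rw [hC2_denom] at hC2
  rw [add_sub_right_comm] at ha0 ha1
  rw [hψ, add_sub_right_comm, add_sub_right_comm ρ _ μ2]
  exact (h.payoff_pos h' hη ha0 ha1 (by linarith) (by linarith) hk' hC2 hy0 hyk).le
end
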